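/- Let A > 0, B ∈ ℝ, μ ∈ (2/3, 2) with μ ≠ 1, and let f be the 2π-periodic extension of u ↦ A|u|^{2/3} + B|u|^μ from [−π,π). Then there exist functions R₁ and R₂ defined near 0 with R₁(u) = O(|u|^{2/3}) and R₂(u) = o(|u|^{μ−1/3}) as u → 0, such that for all u ≠ 0 near 0, f(u) · (K_∞ f)(u) = −(2/√3) A² |u|^{1/3} − A B (2/√3 + μ tan(πμ/2)) |u|^{μ−1/3} + R₁(u) + R₂(u). -/

import Mathlib

open Real MeasureTheory Filter Set Asymptotics

/-- Principal value (at `u`) of the integral of `g` over `(-π, π)`. -/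
noncomputable def pvInt (g : ℝ → ℝ) (u : ℝ) : ℝ :=
  limUnder (nhdsWithin (0:ℝ) (Set.Ioi 0))
    (fun ε : ℝ => ∫ x in {x : ℝ | x ∈ Set.Ioo (-π) π ∧ ε < |x - u|}, g x)

/-- Periodic Hilbert transform of a `2π`-periodic function:
`ℋ(f)(u) = (1/π) Σ_{n ∈ ℤ} p.v.∫_{-π}^{π} f(x)/(x - u + 2πn) dx`. -/
noncomputable def periodicHilbert (f : ℝ → ℝ) (u : ℝ) : ℝ :=
  (1/π) * ∑' n : ℤ, pvInt (fun x => f x / (x - u + 2*π*(n : ℝ))) u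

/-- The operator `K_∞ = -ℋ ∂ᵤ` acting via the a.e. derivative. -/
noncomputable def Kinf (f : ℝ → ℝ) (u : ℝ) : ℝ := - periodicHilbert (deriv f) u

/-- The `2π`-periodic extension of `g : [-π, π) → ℝ`. -/
noncomputable def perExt (g : ℝ → ℝ) (x : ℝ) : ℝ :=
  g (x - 2*π*(⌊(x + π)/(2*π)⌋ : ℝ))

/-!
Away from `0` and inside one period, the derivative of `f` is a combination of odd powers
`sign x * |x| ^ (s - 1)`. Subtracting the value at `u` turns the principal value into an ordinary
integral of difference quotients. For a single odd power, folding `x ↦ -x` and rescaling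
`x = |u| t` rewrite that integral as `2 |u| ^ (s - 1)` times the integral of
`(1 - t ^ s) / (1 - t ^ 2)` over `0 < t < π / |u|`. By the partial fractions of the cotangent the
latter is `(π / 2) tan (π s / 2)`, up to an error which the prefactor makes bounded. For `s > 1`,
where the integral over the half-line diverges, splitting off `t ^ (s - 2)` replaces `s` by `s - 2`
and leaves the tangent unchanged.

All remaining contributions to `K_∞ f` are bounded, and multiplied by `f = O(|u| ^ (2 / 3))` they
form `R₁`. The product of the two `B` terms is `R₂`.
-/

open scoped Topology

theorem hasSum_pi_mul_cot_sub_one_div {x : ℝ} (hx : ∀ n : ℤ, (n : ℝ) ≠ x) :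
    HasSum (fun n : ℕ => 1 / (x - (n + 1)) + 1 / (x + (n + 1))) (π * cot (π * x) - 1 / x) := by
  have hx' : (x : ℂ) ∈ Complex.integerComplement := fun ⟨n, hn⟩ => hx n (by exact_mod_cast hn)
  rw [← Complex.hasSum_ofReal]
  push_cast
  rw [cot_series_rep' hx']
  exact (summable_cotTerm hx').hasSum

theorem hasSum_sub_succ_of_antitone {a : ℕ → ℝ} (ha : Antitone a)
    (hlim : Tendsto a atTop (𝓝 0)) : HasSum (fun n => a n - a (n + 1)) (a 0) := by
  rw [hasSum_iff_tendsto_nat_of_nonneg fun n => sub_nonneg.2 (ha n.le_succ)]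
  simpa only [Finset.sum_range_sub', sub_zero] using hlim.const_sub (a 0)

theorem hasSum_one_div_sub_one_div_tan {r : ℝ} (hr : r ∈ Ioo (-1) 1) :
    HasSum (fun n : ℕ => 1 / (2 * n + 1 - r) - 1 / (2 * n + 1 + r))
      (π / 2 * tan (π * r / 2)) := by
  obtain ⟨hr₁, hr₂⟩ := hr
  set a : ℕ → ℝ := fun n => 1 / (2 * n + 1 - r) with ha
  have pos_sub (n : ℕ) : 0 < 2 * (n : ℝ) + 1 - r := by linarith [n.cast_nonneg (α := ℝ)]
  have pos_add (n : ℕ) : 0 < 2 * (n : ℝ) + 1 + r := by linarith [n.cast_nonneg (α := ℝ)]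
  have hanti : Antitone a := fun m n hmn => by
    have : (m : ℝ) ≤ n := by exact_mod_cast hmn
    exact one_div_le_one_div_of_le (pos_sub m) (by linarith)
  have hlim : Tendsto a atTop (𝓝 0) := by
    have h : Tendsto (fun n : ℕ => 2 * (n : ℝ) + (1 - r)) atTop atTop :=
      tendsto_atTop_add_const_right _ _ (tendsto_natCast_atTop_atTop.const_mul_atTop two_pos)
    simpa only [ha, add_sub_assoc] using h.const_div_atTop 1
  have hcot : cot (π * ((1 - r) / 2)) = tan (π * r / 2) := by
    rw [show π * ((1 - r) / 2) = π / 2 - π * r / 2 by ring, ← tan_inv_eq_cot,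
      tan_pi_div_two_sub, inv_inv]
  have hint (n : ℤ) : (n : ℝ) ≠ (1 - r) / 2 := fun h => by
    have h₀ : (0 : ℝ) < n := by linarith
    have h₁ : (n : ℝ) < 1 := by linarith
    norm_cast at h₀ h₁
    lia
  -- The partial fractions of `π cot (π (1 - r) / 2)` pair the terms with a shift by one.
  have hsum := ((hasSum_pi_mul_cot_sub_one_div hint).mul_left (1 / 2)).add
    (hasSum_sub_succ_of_antitone hanti hlim)
  rw [hcot] at hsum
  convert! hsum using 1
  · funext n
    have h₁ := pos_sub (n + 1)
    have h₂ := pos_add n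
    have e₁ : (1 - r) / 2 - (n + 1) = -(2 * n + 1 + r) / 2 := by ring
    have e₂ : (1 - r) / 2 + (n + 1) = (2 * ↑(n + 1) + 1 - r) / 2 := by push_cast; ring
    simp only [ha, e₁, e₂]
    field_simp
    ring
  · have : 1 - r ≠ 0 := by linarith
    simp only [ha, Nat.cast_zero, mul_zero, zero_add]
    field_simp
    ring

/-- The kernel `(1 - t ^ r) / (1 - t ^ 2)`, whose integral over a half-line produces the tangent
coefficients. Its singularity at `t = 1` is removable, but the value there is the junk value `0`. -/
noncomputable def rpowKernel (r t : ℝ) : ℝ := (1 - t ^ r) / (1 - t ^ 2)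

theorem measurable_rpowKernel (r : ℝ) : Measurable (rpowKernel r) := by
  unfold rpowKernel
  fun_prop

theorem abs_rpowKernel_le {r t : ℝ} (hr : r ∈ Icc (-2) 2) (ht : t ∈ Ioo 0 1) :
    |rpowKernel r t| ≤ 1 + t ^ r := by
  obtain ⟨ht₀, ht₁⟩ := ht
  have hden : 0 < 1 - t ^ 2 := by nlinarith
  have hpos := rpow_pos_of_pos ht₀ r
  have one_sub_rpow {q : ℝ} (hq₀ : 0 ≤ q) (hq₂ : q ≤ 2) : |1 - t ^ q| ≤ 1 - t ^ 2 := by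
    rw [abs_of_nonneg (sub_nonneg.2 (rpow_le_one ht₀.le ht₁.le hq₀)), ← rpow_two]
    exact sub_le_sub_left (rpow_le_rpow_of_exponent_ge ht₀ ht₁.le hq₂) 1
  rw [rpowKernel, abs_div, abs_of_pos hden, div_le_iff₀ hden]
  rcases le_total 0 r with h | h
  · nlinarith [one_sub_rpow h hr.2]
  · have hfactor : 1 - t ^ r = -(t ^ r * (1 - t ^ (-r))) := by
      rw [mul_sub, ← rpow_add ht₀, add_neg_cancel, rpow_zero]
      ring
    rw [hfactor, abs_neg, abs_mul, abs_of_pos hpos]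
    nlinarith [mul_le_mul_of_nonneg_left
      (one_sub_rpow (neg_nonneg.2 h) (by linarith [hr.1])) hpos.le]

theorem rpowKernel_inv (r : ℝ) {t : ℝ} (ht : 0 < t) :
    rpowKernel r t⁻¹ = -(t ^ 2 * rpowKernel (-r) t) := by
  rcases eq_or_ne t 1 with rfl | ht₁
  · simp [rpowKernel]
  have h₁ : 1 - t ^ 2 ≠ 0 := fun h => ht₁ (by nlinarith)
  have h₂ : t ^ 2 - 1 ≠ 0 := fun h => h₁ (by linarith)
  simp only [rpowKernel, inv_rpow ht.le, ← rpow_neg ht.le]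
  field_simp
  ring

theorem rpowKernel_eq_add (r : ℝ) {t : ℝ} (ht : 0 < t) (ht₁ : t ≠ 1) :
    rpowKernel r t = rpowKernel (r - 2) t + t ^ (r - 2) := by
  have h₁ : 1 - t ^ 2 ≠ 0 := fun h => ht₁ (by nlinarith)
  have hr : t ^ r = t ^ (r - 2) * t ^ 2 := by
    rw [← rpow_two, ← rpow_add ht, sub_add_cancel]
  rw [rpowKernel, rpowKernel, hr]
  field_simp
  ring

theorem abs_rpowKernel_le_of_one_lt {r t : ℝ} (hr : r ∈ Icc (-2) 2) (ht : 1 < t) :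
    |rpowKernel r t| ≤ t ^ (-2 : ℝ) + t ^ (r - 2) := by
  have ht₀ : 0 < t := one_pos.trans ht
  have hinv := rpowKernel_inv r (inv_pos.2 ht₀)
  rw [inv_inv] at hinv
  have hle := abs_rpowKernel_le (r := -r) (t := t⁻¹) ⟨by linarith [hr.2], by linarith [hr.1]⟩
    ⟨inv_pos.2 ht₀, inv_lt_one_of_one_lt₀ ht⟩
  rw [hinv, abs_neg, abs_mul, abs_of_nonneg (sq_nonneg _)]
  calc t⁻¹ ^ 2 * |rpowKernel (-r) t⁻¹| ≤ t⁻¹ ^ 2 * (1 + t⁻¹ ^ (-r)) := by gcongr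
    _ = t ^ (-2 : ℝ) + t ^ (r - 2) := by
      rw [inv_rpow ht₀.le, rpow_neg ht₀.le, inv_inv, sub_eq_add_neg, rpow_add ht₀,
        rpow_neg ht₀.le, rpow_two]
      ring

theorem integrableOn_rpowKernel_Ioo {r : ℝ} (hr : r ∈ Ioc (-1) 2) :
    IntegrableOn (rpowKernel r) (Ioo 0 1) := by
  have hdom : IntegrableOn (fun t : ℝ => 1 + t ^ r) (Ioo 0 1) :=
    Integrable.add (by simp) ((intervalIntegral.integrableOn_Ioo_rpow_iff one_pos).2 hr.1)
  refine hdom.mono' (measurable_rpowKernel r).aestronglyMeasurable ?_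
  filter_upwards [self_mem_ae_restrict measurableSet_Ioo] with t ht
  exact abs_rpowKernel_le ⟨by linarith [hr.1], hr.2⟩ ht

theorem abs_integral_Ioi_rpowKernel_le {r T : ℝ} (hr : r ∈ Ico (-2) 1) (hT : 1 ≤ T) :
    IntegrableOn (rpowKernel r) (Ioi T) ∧
      |∫ t in Ioi T, rpowKernel r t| ≤ T⁻¹ + T ^ (r - 1) / (1 - r) := by
  have hT₀ : 0 < T := one_pos.trans_le hT
  have h₁ : IntegrableOn (fun t : ℝ => t ^ (-2 : ℝ)) (Ioi T) :=
    integrableOn_Ioi_rpow_of_lt (by norm_num) hT₀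
  have h₂ : IntegrableOn (fun t : ℝ => t ^ (r - 2)) (Ioi T) :=
    integrableOn_Ioi_rpow_of_lt (by linarith [hr.2]) hT₀
  have hbound : ∀ᵐ t ∂volume.restrict (Ioi T), ‖rpowKernel r t‖ ≤ t ^ (-2 : ℝ) + t ^ (r - 2) := by
    filter_upwards [self_mem_ae_restrict measurableSet_Ioi] with t ht
    exact abs_rpowKernel_le_of_one_lt ⟨hr.1, by linarith [hr.2]⟩ (hT.trans_lt ht)
  refine ⟨(h₁.add h₂).mono' (measurable_rpowKernel r).aestronglyMeasurable hbound, ?_⟩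
  calc |∫ t in Ioi T, rpowKernel r t| ≤ ∫ t in Ioi T, (t ^ (-2 : ℝ) + t ^ (r - 2)) :=
        norm_integral_le_of_norm_le (h₁.add h₂) hbound
    _ = T⁻¹ + T ^ (r - 1) / (1 - r) := by
      rw [integral_add h₁ h₂, integral_Ioi_rpow_of_lt (by norm_num) hT₀,
        integral_Ioi_rpow_of_lt (by linarith [hr.2]) hT₀, show (-2 : ℝ) + 1 = -1 by norm_num,
        show r - 2 + 1 = r - 1 by ring, rpow_neg_one, ← neg_sub 1 r, div_neg, neg_div_neg_eq]
      ring

theorem integral_Ioi_one_rpowKernel (r : ℝ) :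
    ∫ t in Ioi 1, rpowKernel r t = -∫ t in Ioo 0 1, rpowKernel (-r) t := by
  have himage : (fun t : ℝ => t⁻¹) '' Ioo 0 1 = Ioi 1 := by
    rw [image_inv_eq_inv, inv_Ioo_0_left one_pos, inv_one]
  rw [← himage, integral_image_eq_integral_abs_deriv_smul measurableSet_Ioo
    (fun t ht => (hasDerivAt_inv ht.1.ne').hasDerivWithinAt) inv_injective.injOn, ← integral_neg]
  refine setIntegral_congr_fun measurableSet_Ioo fun t ht => ?_
  have ht₀ : t ≠ 0 := ht.1.ne'
  simp only [rpowKernel_inv r ht.1, abs_neg, abs_inv, abs_of_nonneg (sq_nonneg t), smul_eq_mul]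
  field_simp

theorem integral_Ioo_rpow_sub_rpow {p q : ℝ} (hp : -1 < p) (hq : -1 < q) :
    IntegrableOn (fun t : ℝ => t ^ p - t ^ q) (Ioo 0 1) ∧
      ∫ t in Ioo (0 : ℝ) 1, (t ^ p - t ^ q) = 1 / (p + 1) - 1 / (q + 1) := by
  have hint {r : ℝ} (hr : -1 < r) : IntegrableOn (fun t : ℝ => t ^ r) (Ioo 0 1) :=
    (intervalIntegral.integrableOn_Ioo_rpow_iff one_pos).2 hr
  have hval {r : ℝ} (hr : -1 < r) : ∫ t in Ioo (0 : ℝ) 1, t ^ r = 1 / (r + 1) := by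
    rw [← integral_Ioc_eq_integral_Ioo, ← intervalIntegral.integral_of_le zero_le_one,
      integral_rpow (Or.inl hr), one_rpow, zero_rpow (by linarith), sub_zero]
  exact ⟨(hint hp).sub (hint hq), by rw [integral_sub (hint hp) (hint hq), hval hp, hval hq]⟩

theorem integral_Ioo_norm_rpow_sub_rpow {p q : ℝ} (hp : -1 < p) (hq : -1 < q) :
    ∫ t in Ioo (0 : ℝ) 1, ‖t ^ p - t ^ q‖ = |1 / (p + 1) - 1 / (q + 1)| := by
  wlog hpq : p ≤ q generalizing p q
  · simpa only [norm_sub_rev, abs_sub_comm] using this hq hp (le_of_not_ge hpq)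
  have hle : 1 / (q + 1) ≤ 1 / (p + 1) := one_div_le_one_div_of_le (by linarith) (by linarith)
  rw [abs_of_nonneg (sub_nonneg.2 hle), ← (integral_Ioo_rpow_sub_rpow hp hq).2]
  exact setIntegral_congr_fun measurableSet_Ioo fun t ht =>
    norm_of_nonneg (sub_nonneg.2 (rpow_le_rpow_of_exponent_ge ht.1 ht.2.le hpq))

theorem hasSum_rpow_sub_rpow (r : ℝ) {t : ℝ} (ht : t ∈ Ioo 0 1) :
    HasSum (fun n : ℕ => t ^ (2 * n - r) - t ^ (2 * n + r))
      (rpowKernel r t - rpowKernel (-r) t) := by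
  have hgeom := (hasSum_geometric_of_lt_one (sq_nonneg t)
    (by nlinarith [ht.1, ht.2] : t ^ 2 < 1)).mul_right (t ^ (-r) - t ^ r)
  convert! hgeom using 1
  · funext n
    rw [sub_eq_add_neg (2 * (n : ℝ)) r, rpow_add ht.1, rpow_add ht.1, ← pow_mul, ← rpow_natCast]
    push_cast
    ring
  · simp only [rpowKernel]
    ring

theorem integral_Ioo_rpowKernel_sub {r : ℝ} (hr : r ∈ Ioo (-1) 1) :
    (∫ t in Ioo 0 1, rpowKernel r t) - ∫ t in Ioo 0 1, rpowKernel (-r) t =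
      π / 2 * tan (π * r / 2) := by
  obtain ⟨hr₁, hr₂⟩ := hr
  have hp (n : ℕ) : -1 < 2 * n - r := by linarith [n.cast_nonneg (α := ℝ)]
  have hq (n : ℕ) : -1 < 2 * n + r := by linarith [n.cast_nonneg (α := ℝ)]
  have hterm (n : ℕ) := integral_Ioo_rpow_sub_rpow (hp n) (hq n)
  have hvalue (n : ℕ) : ∫ t in Ioo (0 : ℝ) 1, (t ^ (2 * n - r) - t ^ (2 * n + r)) =
      1 / (2 * n + 1 - r) - 1 / (2 * n + 1 + r) := by
    rw [(hterm n).2, sub_add_eq_add_sub, add_right_comm]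
  have hnorm (n : ℕ) : ∫ t in Ioo (0 : ℝ) 1, ‖t ^ (2 * n - r) - t ^ (2 * n + r)‖ =
      |1 / (2 * n + 1 - r) - 1 / (2 * n + 1 + r)| := by
    rw [integral_Ioo_norm_rpow_sub_rpow (hp n) (hq n), sub_add_eq_add_sub, add_right_comm]
  have htan := hasSum_one_div_sub_one_div_tan ⟨hr₁, hr₂⟩
  have hsum := hasSum_integral_of_summable_integral_norm (fun n => (hterm n).1)
    (by simpa only [hnorm] using htan.summable.abs)
  rw [← integral_sub (integrableOn_rpowKernel_Ioo ⟨hr₁, by linarith⟩)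
    (integrableOn_rpowKernel_Ioo ⟨by linarith, by linarith⟩)]
  refine Eq.trans (setIntegral_congr_fun measurableSet_Ioo fun t ht =>
    (hasSum_rpow_sub_rpow r ht).tsum_eq.symm) (hsum.unique ?_)
  simpa only [hvalue] using htan

theorem integral_Ioi_rpowKernel {r : ℝ} (hr : r ∈ Ioo (-1) 1) :
    IntegrableOn (rpowKernel r) (Ioi 0) ∧
      ∫ t in Ioi 0, rpowKernel r t = π / 2 * tan (π * r / 2) := by
  have hIoc : IntegrableOn (rpowKernel r) (Ioc 0 1) :=
    (integrableOn_Ioc_iff_integrableOn_Ioo).2 <|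
      integrableOn_rpowKernel_Ioo ⟨hr.1, by linarith [hr.2]⟩
  have hIoi := (abs_integral_Ioi_rpowKernel_le (r := r) ⟨by linarith [hr.1], hr.2⟩ le_rfl).1
  rw [← Ioc_union_Ioi_eq_Ioi zero_le_one]
  refine ⟨hIoc.union hIoi, ?_⟩
  rw [setIntegral_union (Ioc_disjoint_Ioi le_rfl) measurableSet_Ioi hIoc hIoi,
    integral_Ioc_eq_integral_Ioo, integral_Ioi_one_rpowKernel, ← sub_eq_add_neg,
    integral_Ioo_rpowKernel_sub hr]

theorem abs_integral_rpowKernel_sub_le {r T : ℝ} (hr : r ∈ Ioo (-1) 1) (hT : 1 ≤ T) :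
    |(∫ t in 0..T, rpowKernel r t) - π / 2 * tan (π * r / 2)| ≤ T⁻¹ + T ^ (r - 1) / (1 - r) := by
  obtain ⟨hint, hval⟩ := integral_Ioi_rpowKernel hr
  have htail := (abs_integral_Ioi_rpowKernel_le (r := r) ⟨by linarith [hr.1], hr.2⟩ hT).2
  rwa [← hval, ← intervalIntegral.integral_Ioi_sub_Ioi hint (zero_le_one.trans hT),
    sub_sub_cancel_left, abs_neg]

theorem integral_rpowKernel_eq_add {s T : ℝ} (hs : s ∈ Ioo 1 3) (hT : 0 ≤ T) :
    ∫ t in 0..T, rpowKernel s t =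
      (∫ t in 0..T, rpowKernel (s - 2) t) + T ^ (s - 1) / (s - 1) := by
  have hker : IntervalIntegrable (rpowKernel (s - 2)) volume 0 T :=
    (intervalIntegrable_iff_integrableOn_Ioc_of_le hT).2 <|
      (integral_Ioi_rpowKernel ⟨by linarith [hs.1], by linarith [hs.2]⟩).1.mono_set
        Ioc_subset_Ioi_self
  have hpow : IntervalIntegrable (fun t : ℝ => t ^ (s - 2)) volume 0 T :=
    intervalIntegral.intervalIntegrable_rpow' (by linarith [hs.1])
  have hval : ∫ t in 0..T, t ^ (s - 2) = T ^ (s - 1) / (s - 1) := by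
    rw [integral_rpow (Or.inl (by linarith [hs.1])), show s - 2 + 1 = s - 1 by ring,
      zero_rpow (by linarith [hs.1]), sub_zero]
  rw [← hval, ← intervalIntegral.integral_add hker hpow]
  refine intervalIntegral.integral_congr_ae ?_
  filter_upwards [Measure.ae_ne volume 1] with t ht₁ ht
  rw [uIoc_of_le hT] at ht
  exact rpowKernel_eq_add s ht.1 ht₁

theorem integral_rpowKernel_sub_isBigO {s : ℝ} (hs : s ∈ Ioo 0 2) (hs₁ : s ≠ 1) :
    (fun T => (∫ t in 0..T, rpowKernel s t) - π / 2 * tan (π * s / 2)) =O[atTop]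
      fun T => T ^ (s - 1) := by
  have inv_le {T : ℝ} (hT : 1 ≤ T) : T⁻¹ ≤ T ^ (s - 1) := by
    rw [← rpow_neg_one]
    exact rpow_le_rpow_of_exponent_le hT (by linarith [hs.1])
  rcases lt_or_gt_of_ne hs₁ with h | h
  · refine IsBigO.of_bound (1 + 1 / (1 - s)) ?_
    filter_upwards [eventually_ge_atTop 1] with T hT
    rw [norm_of_nonneg (rpow_nonneg (by linarith) _)]
    refine (abs_integral_rpowKernel_sub_le ⟨by linarith [hs.1], h⟩ hT).trans ?_
    rw [add_mul, one_mul, one_div_mul_eq_div]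
    exact add_le_add_left (inv_le hT) _
  · refine IsBigO.of_bound (1 + 1 / (3 - s) + 1 / (s - 1)) ?_
    filter_upwards [eventually_ge_atTop 1] with T hT
    have hT₀ : 0 ≤ T := by linarith
    have htan : tan (π * s / 2) = tan (π * (s - 2) / 2) := by
      rw [show π * (s - 2) / 2 = π * s / 2 - π by ring, tan_sub_pi]
    have hle := abs_integral_rpowKernel_sub_le (r := s - 2)
      ⟨by linarith, by linarith [hs.2]⟩ hT
    have hpow : T ^ (s - 2 - 1) ≤ T ^ (s - 1) := rpow_le_rpow_of_exponent_le hT (by linarith)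
    have h₃ : 0 < 3 - s := by linarith [hs.2]
    have h₁ : 0 < s - 1 := by linarith
    have hpos := rpow_nonneg hT₀ (s - 1)
    rw [norm_of_nonneg hpos, integral_rpowKernel_eq_add ⟨h, by linarith [hs.2]⟩ hT₀, htan,
      add_sub_right_comm]
    calc _ ≤ T⁻¹ + T ^ (s - 2 - 1) / (1 - (s - 2)) + T ^ (s - 1) / (s - 1) :=
          (abs_add_le _ _).trans (add_le_add hle (abs_of_nonneg (div_nonneg hpos h₁.le)).le)
      _ ≤ T ^ (s - 1) + T ^ (s - 1) / (3 - s) + T ^ (s - 1) / (s - 1) := by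
          rw [show 1 - (s - 2) = 3 - s by ring]
          gcongr
          exact inv_le hT
      _ = _ := by ring

theorem tendsto_integral_lt_abs_sub {g : ℝ → ℝ} {s : Set ℝ} (hg : IntegrableOn g s) (u : ℝ) :
    Tendsto (fun ε : ℝ => ∫ x in {x | x ∈ s ∧ ε < |x - u|}, g x) (𝓝[>] 0)
      (𝓝 (∫ x in s, g x)) := by
  have hmeas (ε : ℝ) : MeasurableSet {x | ε < |x - u|} :=
    measurableSet_lt measurable_const (by fun_prop)
  have hindicator (ε : ℝ) : ∫ x in {x | x ∈ s ∧ ε < |x - u|}, g x =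
      ∫ x in s, {x | ε < |x - u|}.indicator g x :=
    (setIntegral_indicator (hmeas ε)).symm
  simp only [hindicator]
  refine tendsto_integral_filter_of_dominated_convergence (fun x => ‖g x‖)
    (.of_forall fun ε => hg.aestronglyMeasurable.indicator (hmeas ε))
    (.of_forall fun ε => .of_forall fun x => norm_indicator_le_norm_self _ _) hg.norm ?_
  filter_upwards [ae_restrict_of_ae (Measure.ae_ne volume u)] with x hx
  refine tendsto_const_nhds.congr' ?_
  filter_upwards [nhdsWithin_le_nhds (Iio_mem_nhds (abs_pos.2 (sub_ne_zero.2 hx)))] with ε hε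
  exact (indicator_of_mem (s := {x | ε < |x - u|}) hε g).symm

theorem pvInt_eq_integral {g : ℝ → ℝ} (hg : IntegrableOn g (Ioo (-π) π)) (u : ℝ) :
    pvInt g u = ∫ x in Ioo (-π) π, g x :=
  (tendsto_integral_lt_abs_sub hg u).limUnder_eq

theorem pvInt_congr_ae {g h : ℝ → ℝ} (hgh : g =ᵐ[volume.restrict (Ioo (-π) π)] h) (u : ℝ) :
    pvInt g u = pvInt h u := by
  unfold pvInt
  congr 1
  funext ε
  exact integral_congr_ae (ae_restrict_of_ae_restrict_of_subset (fun x hx => hx.1) hgh)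

theorem periodicHilbert_congr_ae {g h : ℝ → ℝ} (hgh : g =ᵐ[volume.restrict (Ioo (-π) π)] h) :
    periodicHilbert g = periodicHilbert h := by
  funext u
  have hterm (n : ℤ) : pvInt (fun x => g x / (x - u + 2 * π * n)) u =
      pvInt (fun x => h x / (x - u + 2 * π * n)) u :=
    pvInt_congr_ae (hgh.mono fun x hx => by simp only [hx]) u
  simp only [periodicHilbert, hterm]

theorem setOf_mem_Ioo_and_lt_abs_sub {a b u ε : ℝ} (ha : a ≤ u + ε) (hb : u - ε ≤ b) :
    {x | x ∈ Ioo a b ∧ ε < |x - u|} = Ioo a (u - ε) ∪ Ioo (u + ε) b := by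
  ext x
  simp only [mem_ofPred_eq, mem_union, mem_Ioo, lt_abs]
  constructor
  · rintro ⟨⟨hax, hxb⟩, h | h⟩
    · exact .inr ⟨by linarith, hxb⟩
    · exact .inl ⟨hax, by linarith⟩
  · rintro (⟨h₁, h₂⟩ | ⟨h₁, h₂⟩)
    · exact ⟨⟨h₁, by linarith⟩, .inr (by linarith)⟩
    · exact ⟨⟨by linarith, h₂⟩, .inl (by linarith)⟩

theorem integral_one_div_sub_lt_abs_sub {a b u ε : ℝ} (hε : 0 < ε) (ha : ε < u - a)
    (hb : ε < b - u) :
    IntegrableOn (fun x => 1 / (x - u)) {x | x ∈ Ioo a b ∧ ε < |x - u|} ∧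
      ∫ x in {x | x ∈ Ioo a b ∧ ε < |x - u|}, 1 / (x - u) = log ((b - u) / (u - a)) := by
  have hint {c d : ℝ} (h : ∀ x ∈ Icc c d, x - u ≠ 0) :
      IntegrableOn (fun x => 1 / (x - u)) (Ioo c d) :=
    (ContinuousOn.integrableOn_Icc (by fun_prop (disch := exact h))).mono_set Ioo_subset_Icc_self
  have hleft := hint (c := a) (d := u - ε) fun x hx => by linarith [hx.2]
  have hright := hint (c := u + ε) (d := b) fun x hx => by linarith [hx.1]
  have hdisj : Disjoint (Ioo a (u - ε)) (Ioo (u + ε) b) :=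
    disjoint_left.2 fun x h₁ h₂ => by linarith [h₁.2, h₂.1]
  rw [setOf_mem_Ioo_and_lt_abs_sub (by linarith) (by linarith)]
  refine ⟨hleft.union hright, ?_⟩
  rw [setIntegral_union hdisj measurableSet_Ioo hleft hright,
    ← integral_Ioc_eq_integral_Ioo, ← integral_Ioc_eq_integral_Ioo,
    ← intervalIntegral.integral_of_le (by linarith),
    ← intervalIntegral.integral_of_le (by linarith),
    intervalIntegral.integral_comp_sub_right (fun x => 1 / x),
    intervalIntegral.integral_comp_sub_right (fun x => 1 / x),
    integral_one_div_of_neg (by linarith) (by linarith),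
    integral_one_div_of_pos (by linarith) (by linarith), sub_sub_cancel_left, add_sub_cancel_left,
    ← neg_sub u a, neg_div_neg_eq,
    ← log_mul (div_pos hε (by linarith)).ne' (div_pos (by linarith) hε).ne']
  congr 1
  field_simp

theorem integrableOn_slope {h : ℝ → ℝ} {s : Set ℝ} {u : ℝ} (hint : IntegrableOn h s)
    (hs : volume s ≠ ⊤) (hdiff : DifferentiableAt ℝ h u) : IntegrableOn (slope h u) s := by
  obtain ⟨C, hC, hbound⟩ := hdiff.hasDerivAt.isBigO_sub.exists_pos
  obtain ⟨δ, hδ, hnear⟩ := Metric.eventually_nhds_iff.1 hbound.bound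
  have hconst (c : ℝ) : IntegrableOn (fun _ => c) s := integrableOn_const hs
  have hmeas : AEStronglyMeasurable (slope h u) (volume.restrict s) := by
    have hinv : Measurable fun x : ℝ => (x - u)⁻¹ := by fun_prop
    exact hinv.aestronglyMeasurable.smul (hint.sub (hconst _)).aestronglyMeasurable
  refine ((hconst C).add ((hint.norm.add (hconst ‖h u‖)).div_const δ)).mono' hmeas
    (.of_forall fun x => ?_)
  rw [slope_def_field, norm_div]
  rcases lt_or_ge (dist x u) δ with hx | hx
  · refine (div_le_of_le_mul₀ (norm_nonneg _) hC.le (hnear hx)).trans (le_add_of_nonneg_right ?_)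
    exact div_nonneg (add_nonneg (norm_nonneg _) (norm_nonneg _)) hδ.le
  · refine le_add_of_nonneg_of_le hC.le ?_
    exact div_le_div₀ (add_nonneg (norm_nonneg _) (norm_nonneg _)) (norm_sub_le _ _) hδ hx

theorem pvInt_div_sub {h : ℝ → ℝ} {u : ℝ} (hint : IntegrableOn h (Ioo (-π) π))
    (hu : u ∈ Ioo (-π) π) (hdiff : DifferentiableAt ℝ h u) :
    pvInt (fun x => h x / (x - u)) u =
      (∫ x in Ioo (-π) π, slope h u x) + h u * log ((π - u) / (π + u)) := by
  have hslope := integrableOn_slope hint (by simp) hdiff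
  refine Tendsto.limUnder_eq (((tendsto_integral_lt_abs_sub hslope u).add_const _).congr' ?_)
  have hmin : 0 < min (u + π) (π - u) := lt_min (by linarith [hu.1]) (by linarith [hu.2])
  filter_upwards [self_mem_nhdsWithin, nhdsWithin_le_nhds (Iio_mem_nhds hmin)] with ε hε hεlt
  obtain ⟨hleft, hright⟩ := lt_min_iff.1 (mem_Iio.1 hεlt)
  obtain ⟨hinv, hlog⟩ := integral_one_div_sub_lt_abs_sub hε (by rwa [sub_neg_eq_add]) hright
  rw [add_comm π u, ← sub_neg_eq_add u, ← hlog, ← integral_const_mul,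
    ← integral_add (hslope.mono_set fun x hx => hx.1) (hinv.const_mul _)]
  congr 1
  funext x
  rw [slope_def_field]
  ring

theorem abs_intCast_le_abs_sub_add {x u : ℝ} {n : ℤ} (hx : |x| ≤ π) (hu : |u| ≤ 1)
    (hn : n ≠ 0) : |(n : ℝ)| ≤ |x - u + 2 * π * n| := by
  have hxu : |x - u| ≤ π + 1 := (abs_sub x u).trans (add_le_add hx hu)
  have hn₁ : (1 : ℝ) ≤ |(n : ℝ)| := by exact_mod_cast Int.one_le_abs hn
  have htri := abs_sub_abs_le_abs_add (2 * π * n) (x - u)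
  rw [abs_mul, abs_of_pos two_pi_pos, add_comm (2 * π * (n : ℝ)) (x - u)] at htri
  nlinarith [pi_gt_three]

theorem abs_one_div_sub_one_div_le {x u : ℝ} {n : ℤ} (hx : |x| ≤ π) (hu : |u| ≤ 1)
    (hn : n ≠ 0) : |1 / (x - u + 2 * π * n) - 1 / (2 * π * n)| ≤ 1 / (n : ℝ) ^ 2 := by
  have hxu : |x - u| ≤ π + 1 := (abs_sub x u).trans (add_le_add hx hu)
  have hden := abs_intCast_le_abs_sub_add hx hu hn
  have hn₀ : 0 < |(n : ℝ)| := abs_pos.2 (Int.cast_ne_zero.2 hn)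
  have hpos : 0 < |x - u + 2 * π * n| := hn₀.trans_le hden
  have hperiod : |2 * π * n| = 2 * π * |(n : ℝ)| := by rw [abs_mul, abs_of_pos two_pi_pos]
  rw [div_sub_div _ _ (abs_pos.1 hpos) (mul_ne_zero two_pi_pos.ne' (Int.cast_ne_zero.2 hn)),
    one_mul, mul_one, sub_add_cancel_right, abs_div, abs_neg, abs_mul, hperiod, ← sq_abs,
    div_le_div_iff₀ (by positivity) (by positivity)]
  calc |x - u| * |(n : ℝ)| ^ 2 ≤ 2 * π * |(n : ℝ)| ^ 2 := by
        gcongr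
        linarith [pi_gt_three]
    _ = 1 * (|(n : ℝ)| * (2 * π * |(n : ℝ)|)) := by ring
    _ ≤ 1 * (|x - u + 2 * π * n| * (2 * π * |(n : ℝ)|)) := by gcongr

theorem integrableOn_div_sub_add {H : ℝ → ℝ} (hH : IntegrableOn H (Ioo (-π) π)) {u : ℝ}
    (hu : |u| ≤ 1) {n : ℤ} (hn : n ≠ 0) :
    IntegrableOn (fun x => H x / (x - u + 2 * π * n)) (Ioo (-π) π) := by
  have hinv : Measurable fun x : ℝ => (x - u + 2 * π * n)⁻¹ := by fun_prop
  have hn₁ : (1 : ℝ) ≤ |(n : ℝ)| := by exact_mod_cast Int.one_le_abs hn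
  refine hH.norm.mono' (hH.aestronglyMeasurable.mul hinv.aestronglyMeasurable) ?_
  filter_upwards [self_mem_ae_restrict measurableSet_Ioo] with x hx
  rw [norm_div]
  exact div_le_self (norm_nonneg _)
    (hn₁.trans (abs_intCast_le_abs_sub_add (abs_lt.2 hx).le hu hn))

-- The vanishing mean allows subtracting `1 / (2πn)` from the kernel, which gains a factor `1 / n`.
theorem abs_integral_div_sub_add_le {H : ℝ → ℝ} (hH : IntegrableOn H (Ioo (-π) π))
    (hmean : ∫ x in Ioo (-π) π, H x = 0) {u : ℝ} (hu : |u| ≤ 1) {n : ℤ} (hn : n ≠ 0) :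
    |∫ x in Ioo (-π) π, H x / (x - u + 2 * π * n)| ≤
      (∫ x in Ioo (-π) π, ‖H x‖) * (1 / (n : ℝ) ^ 2) := by
  have hsub : ∫ x in Ioo (-π) π, H x / (x - u + 2 * π * n) =
      ∫ x in Ioo (-π) π, (H x / (x - u + 2 * π * n) - H x / (2 * π * n)) := by
    rw [integral_sub (integrableOn_div_sub_add hH hu hn) (hH.div_const _), integral_div, hmean,
      zero_div, sub_zero]
  rw [hsub, ← norm_eq_abs, ← integral_mul_const]
  refine norm_integral_le_of_norm_le (hH.norm.mul_const _) ?_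
  filter_upwards [self_mem_ae_restrict measurableSet_Ioo] with x hx
  rw [div_eq_mul_one_div, div_eq_mul_one_div (H x) (2 * π * n), ← mul_sub, norm_mul]
  exact mul_le_mul_of_nonneg_left (abs_one_div_sub_one_div_le (abs_lt.2 hx).le hu hn)
    (norm_nonneg _)

theorem norm_tsum_sub_le_of_forall_ne {ι E : Type*} [NormedAddCommGroup E] [CompleteSpace E]
    {a : ι → E} {b : ι → ℝ} (hb : Summable b) {i₀ : ι} (hb₀ : 0 ≤ b i₀)
    (hab : ∀ i ≠ i₀, ‖a i‖ ≤ b i) : ‖(∑' i, a i) - a i₀‖ ≤ ∑' i, b i := by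
  classical
  have ha : Summable a := by
    refine .of_norm_bounded_eventually hb ?_
    filter_upwards [(finite_singleton i₀).compl_mem_cofinite] with i hi
    exact hab i hi
  rw [ha.tsum_eq_add_tsum_ite i₀, add_sub_cancel_left]
  refine tsum_of_norm_bounded hb.hasSum fun i => ?_
  split_ifs with hi
  · rwa [norm_zero, hi]
  · exact hab i hi

theorem abs_log_pi_sub_div_pi_add_le {u : ℝ} (hu : |u| ≤ 1) :
    |log ((π - u) / (π + u))| ≤ |u| := by
  wlog h₀ : 0 ≤ u generalizing u
  · have := this (u := -u) (by rwa [abs_neg]) (by linarith)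
    rwa [abs_neg, sub_neg_eq_add, ← sub_eq_add_neg, ← inv_div, log_inv, abs_neg] at this
  rw [abs_of_nonneg h₀] at hu ⊢
  have hsub : 0 < π - u := by linarith [pi_gt_three]
  have hadd : 0 < π + u := by linarith [pi_gt_three]
  rw [← abs_neg, ← log_inv, inv_div,
    abs_of_nonneg (log_nonneg ((one_le_div hsub).2 (by linarith)))]
  refine (log_le_sub_one_of_pos (div_pos hadd hsub)).trans ?_
  rw [sub_le_iff_le_add, div_le_iff₀ hsub]
  nlinarith [pi_gt_three]

-- Only the local singularity matters: the other periods and the cutoff at `±π` stay bounded.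
theorem periodicHilbert_sub_integral_slope_isBigO_one {H : ℝ → ℝ}
    (hint : IntegrableOn H (Ioo (-π) π)) (hmean : ∫ x in Ioo (-π) π, H x = 0)
    (hdiff : ∀ᶠ u in 𝓝[≠] 0, DifferentiableAt ℝ H u)
    (hH : (fun u => u * H u) =O[𝓝[≠] 0] fun _ => (1 : ℝ)) :
    (fun u => periodicHilbert H u - (1 / π) * ∫ x in Ioo (-π) π, slope H u x) =O[𝓝[≠] 0]
      fun _ => (1 : ℝ) := by
  set b : ℤ → ℝ := fun n => (∫ x in Ioo (-π) π, ‖H x‖) * (1 / (n : ℝ) ^ 2) with hb_def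
  have hb : Summable b := (summable_one_div_int_pow.2 one_lt_two).mul_left _
  have hsmall : ∀ᶠ u : ℝ in 𝓝[≠] 0, |u| ≤ 1 :=
    nhdsWithin_le_nhds ((continuous_abs.tendsto' (0 : ℝ) 0 abs_zero).eventually_le_const one_pos)
  have hlog : (fun u => H u * log ((π - u) / (π + u))) =O[𝓝[≠] 0] fun _ => (1 : ℝ) := by
    refine IsBigO.trans (.of_bound' ?_) hH
    filter_upwards [hsmall] with u hu
    rw [norm_mul, norm_mul, mul_comm ‖u‖]
    exact mul_le_mul_of_nonneg_left (abs_log_pi_sub_div_pi_add_le hu) (norm_nonneg _)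
  have hfar : (fun u => (∑' n : ℤ, pvInt (fun x => H x / (x - u + 2 * π * n)) u) -
      pvInt (fun x => H x / (x - u)) u) =O[𝓝[≠] 0] fun _ => (1 : ℝ) := by
    refine .of_bound (∑' n, b n) ?_
    filter_upwards [hsmall] with u hu
    have hle := norm_tsum_sub_le_of_forall_ne hb (i₀ := 0) (by simp [hb_def])
      (a := fun n : ℤ => pvInt (fun x => H x / (x - u + 2 * π * n)) u) fun n hn => by
        rw [pvInt_eq_integral (integrableOn_div_sub_add hint hu hn)]
        exact abs_integral_div_sub_add_le hint hmean hu hn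
    simpa only [Int.cast_zero, mul_zero, add_zero, norm_one, mul_one] using hle
  refine ((hfar.add hlog).const_mul_left (1 / π)).congr' ?_ .rfl
  filter_upwards [hsmall, hdiff] with u hu hu_diff
  have hu_mem : u ∈ Ioo (-π) π := abs_lt.1 (hu.trans_lt (by linarith [pi_gt_three]))
  rw [periodicHilbert, pvInt_div_sub hint hu_mem hu_diff]
  ring

theorem integral_Ioo_neg_eq_integral_add {g : ℝ → ℝ} {c : ℝ} (hc : 0 ≤ c)
    (hg : IntegrableOn g (Ioo (-c) c)) :
    ∫ x in Ioo (-c) c, g x = ∫ x in 0..c, (g x + g (-x)) := by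
  have hneg : -c ≤ c := by linarith
  have hint : IntervalIntegrable g volume (-c) c :=
    (intervalIntegrable_iff_integrableOn_Ioo_of_le hneg).2 hg
  have hright : IntervalIntegrable g volume 0 c := hint.mono_set <| by
    rw [uIcc_of_le hc, uIcc_of_le hneg]
    exact Icc_subset_Icc_left (by linarith)
  have hleft : IntervalIntegrable g volume (-c) 0 := hint.mono_set <| by
    rw [uIcc_of_le (by linarith), uIcc_of_le hneg]
    exact Icc_subset_Icc_right hc
  have hreflect : IntervalIntegrable (fun x => g (-x)) volume 0 c := by
    simpa only [neg_neg, neg_zero] using ((IntervalIntegrable.iff_comp_neg (f := g)).1 hleft).symm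
  rw [← integral_Ioc_eq_integral_Ioo, ← intervalIntegral.integral_of_le hneg,
    intervalIntegral.integral_add hright hreflect, intervalIntegral.integral_comp_neg, neg_zero,
    add_comm, intervalIntegral.integral_add_adjacent_intervals hleft hright]

/-- The odd power `sign x * |x| ^ p`; up to the factor `p + 1` it is the derivative of
`|x| ^ (p + 1)` away from `0`. -/
noncomputable def oddRpow (p x : ℝ) : ℝ := SignType.sign x * |x| ^ p

theorem oddRpow_neg (p x : ℝ) : oddRpow p (-x) = -oddRpow p x := by
  rw [oddRpow, oddRpow, abs_neg, Left.sign_neg, SignType.coe_neg, neg_mul]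

theorem oddRpow_of_pos {p x : ℝ} (hx : 0 < x) : oddRpow p x = x ^ p := by
  rw [oddRpow, sign_pos hx, abs_of_pos hx, SignType.coe_one, one_mul]

theorem mul_oddRpow_sub_one (s : ℝ) {x : ℝ} (hx : x ≠ 0) : x * oddRpow (s - 1) x = |x| ^ s := by
  rw [oddRpow, ← mul_assoc, self_mul_sign, rpow_sub_one (abs_ne_zero.2 hx),
    mul_div_cancel₀ _ (abs_ne_zero.2 hx)]

theorem intervalIntegrable_oddRpow {p : ℝ} (hp : -1 < p) (a b : ℝ) :
    IntervalIntegrable (oddRpow p) volume a b := by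
  refine intervalIntegrable_of_odd (fun x => (oddRpow_neg p x).symm)
    fun x hx => ?_
  refine (intervalIntegral.intervalIntegrable_rpow' hp).congr fun t ht => ?_
  rw [uIoc_of_le hx.le] at ht
  exact (oddRpow_of_pos ht.1).symm

theorem integrableOn_oddRpow_Ioo {p : ℝ} (hp : -1 < p) (a b : ℝ) :
    IntegrableOn (oddRpow p) (Ioo a b) :=
  (intervalIntegrable_oddRpow hp a b).1.mono_set Ioo_subset_Ioc_self

theorem hasDerivAt_abs_rpow_oddRpow (s : ℝ) {x : ℝ} (hx : x ≠ 0) :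
    HasDerivAt (fun y => |y| ^ s) (s * oddRpow (s - 1) x) x := by
  convert (hasDerivAt_abs hx).rpow_const (p := s) (.inl (abs_ne_zero.2 hx)) using 1
  rw [oddRpow]
  ring

theorem differentiableAt_oddRpow (p : ℝ) {x : ℝ} (hx : x ≠ 0) :
    DifferentiableAt ℝ (oddRpow p) x := by
  have hsign : ∀ᶠ y in 𝓝 x, SignType.sign y = SignType.sign x := by
    simpa only [ContinuousAt, nhds_discrete, tendsto_pure] using continuousAt_sign_of_ne_zero hx
  have hsign_diff : DifferentiableAt ℝ (fun y : ℝ => (SignType.sign y : ℝ)) x :=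
    (differentiableAt_const _).congr_of_eventuallyEq (hsign.mono fun _ => congrArg SignType.cast)
  exact hsign_diff.mul ((differentiableAt_abs hx).rpow_const (.inl (abs_ne_zero.2 hx)))

theorem slope_oddRpow_add_slope_neg (s : ℝ) {u x : ℝ} (hu : u ≠ 0) (hx : 0 < x) (hxu : x ≠ |u|) :
    slope (oddRpow (s - 1)) u x + slope (oddRpow (s - 1)) u (-x) =
      2 * |u| ^ (s - 2) * rpowKernel s (|u|⁻¹ * x) := by
  have hu₀ : 0 < |u| := abs_pos.2 hu
  have hsub : x - u ≠ 0 := fun h => hxu (by rw [← sub_eq_zero.1 h, abs_of_pos hx])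
  have hadd : x + u ≠ 0 := fun h => hxu <| by
    rw [← neg_eq_of_add_eq_zero_right h, abs_neg, abs_of_pos hx]
  have hsq : |u| ^ 2 - x ^ 2 ≠ 0 := by
    rw [sq_abs, sq_sub_sq, ← neg_sub x u, add_comm]
    exact mul_ne_zero hadd (neg_ne_zero.2 hsub)
  have hkernel : |u| ^ (s - 2) * rpowKernel s (|u|⁻¹ * x) =
      (|u| ^ s - x ^ s) / (|u| ^ 2 - x ^ 2) := by
    rw [rpowKernel, mul_rpow (inv_nonneg.2 hu₀.le) hx.le, inv_rpow hu₀.le, rpow_sub hu₀, rpow_two]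
    have := rpow_pos_of_pos hu₀ s
    field_simp
  have hx_pow := mul_oddRpow_sub_one s hx.ne'
  rw [abs_of_pos hx] at hx_pow
  rw [mul_assoc, hkernel, slope_def_field, slope_def_field, oddRpow_neg, ← mul_oddRpow_sub_one s hu,
    ← hx_pow, sq_abs, show -x - u = -(x + u) by ring]
  rw [sq_abs] at hsq
  field_simp
  ring

theorem integral_slope_oddRpow {s u c : ℝ} (hs : 0 < s) (hu : u ≠ 0) (hc : 0 ≤ c) :
    ∫ x in Ioo (-c) c, slope (oddRpow (s - 1)) u x =
      2 * |u| ^ (s - 1) * ∫ t in 0..|u|⁻¹ * c, rpowKernel s t := by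
  have hint : IntegrableOn (slope (oddRpow (s - 1)) u) (Ioo (-c) c) :=
    integrableOn_slope (integrableOn_oddRpow_Ioo (by linarith) _ _) (by simp)
      (differentiableAt_oddRpow _ hu)
  have hu₀ : |u| ≠ 0 := abs_ne_zero.2 hu
  calc ∫ x in Ioo (-c) c, slope (oddRpow (s - 1)) u x
      = ∫ x in 0..c, 2 * |u| ^ (s - 2) * rpowKernel s (|u|⁻¹ * x) := by
        rw [integral_Ioo_neg_eq_integral_add hc hint]
        refine intervalIntegral.integral_congr_ae ?_
        filter_upwards [Measure.ae_ne volume |u|] with x hxu hx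
        rw [uIoc_of_le hc] at hx
        exact slope_oddRpow_add_slope_neg s hu hx.1 hxu
    _ = 2 * (|u| ^ (s - 2) * |u|) * ∫ t in 0..|u|⁻¹ * c, rpowKernel s t := by
        rw [intervalIntegral.integral_const_mul,
          intervalIntegral.integral_comp_mul_left _ (inv_ne_zero hu₀), mul_zero, inv_inv,
          smul_eq_mul]
        ring
    _ = 2 * |u| ^ (s - 1) * ∫ t in 0..|u|⁻¹ * c, rpowKernel s t := by
        rw [← rpow_add_one hu₀, show s - 2 + 1 = s - 1 by ring]

theorem integral_slope_oddRpow_sub_isBigO_one {s c : ℝ} (hs : s ∈ Ioo 0 2) (hs₁ : s ≠ 1)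
    (hc : 0 < c) :
    (fun u => (∫ x in Ioo (-c) c, slope (oddRpow (s - 1)) u x) -
      π * tan (π * s / 2) * |u| ^ (s - 1)) =O[𝓝[≠] 0] fun _ => (1 : ℝ) := by
  have hlim : Tendsto (fun u : ℝ => |u|⁻¹ * c) (𝓝[≠] 0) atTop :=
    (tendsto_inv_nhdsGT_zero.comp tendsto_norm_nhdsNE_zero).atTop_mul_const hc
  have hrescaled := ((isBigO_refl (fun u : ℝ => |u| ^ (s - 1)) (𝓝[≠] 0)).mul
    ((integral_rpowKernel_sub_isBigO hs hs₁).comp_tendsto hlim)).const_mul_left 2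
  have hconst := isBigO_const_const (c ^ (s - 1)) (one_ne_zero (α := ℝ)) (𝓝[≠] (0 : ℝ))
  refine (hrescaled.trans (hconst.congr' ?_ .rfl)).congr' ?_ .rfl
  · filter_upwards [self_mem_nhdsWithin] with u hu
    have hu₀ : 0 < |u| := abs_pos.2 hu
    rw [Function.comp_apply, mul_rpow (inv_nonneg.2 hu₀.le) hc.le, inv_rpow hu₀.le, ← mul_assoc,
      mul_inv_cancel₀ (rpow_pos_of_pos hu₀ _).ne', one_mul]
  · filter_upwards [self_mem_nhdsWithin] with u hu
    rw [integral_slope_oddRpow hs.1 hu hc.le, Function.comp_apply]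
    ring

theorem integrableOn_sum_oddRpow {ι : Type*} {S : Finset ι} {a p : ι → ℝ}
    (hp : ∀ i ∈ S, -1 < p i) (b c : ℝ) :
    IntegrableOn (fun x => ∑ i ∈ S, a i * oddRpow (p i) x) (Ioo b c) :=
  integrable_finsetSum S fun i hi => (integrableOn_oddRpow_Ioo (hp i hi) b c).const_mul (a i)

theorem integral_sum_oddRpow_eq_zero {ι : Type*} {S : Finset ι} {a p : ι → ℝ}
    (hp : ∀ i ∈ S, -1 < p i) {c : ℝ} (hc : 0 ≤ c) :
    ∫ x in Ioo (-c) c, ∑ i ∈ S, a i * oddRpow (p i) x = 0 := by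
  rw [integral_Ioo_neg_eq_integral_add hc (integrableOn_sum_oddRpow hp _ _)]
  simp only [oddRpow_neg, mul_neg, Finset.sum_neg_distrib, add_neg_cancel,
    intervalIntegral.integral_zero]

theorem integral_slope_sum_oddRpow {ι : Type*} {S : Finset ι} {a p : ι → ℝ}
    (hp : ∀ i ∈ S, -1 < p i) {u : ℝ} (hu : u ≠ 0) (b c : ℝ) :
    ∫ x in Ioo b c, slope (fun y => ∑ i ∈ S, a i * oddRpow (p i) y) u x =
      ∑ i ∈ S, a i * ∫ x in Ioo b c, slope (oddRpow (p i)) u x := by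
  have hslope (x : ℝ) : slope (fun y => ∑ i ∈ S, a i * oddRpow (p i) y) u x =
      ∑ i ∈ S, a i * slope (oddRpow (p i)) u x := by
    simp only [slope_def_field, ← Finset.sum_sub_distrib, Finset.sum_div, ← mul_sub, mul_div_assoc]
  simp only [hslope]
  rw [integral_finsetSum S fun i hi => (integrableOn_slope (integrableOn_oddRpow_Ioo (hp i hi) b c)
    (by simp) (differentiableAt_oddRpow (p i) hu)).const_mul (a i)]
  simp only [integral_const_mul]

theorem abs_rpow_isBigO_one {s : ℝ} (hs : 0 ≤ s) :
    (fun u : ℝ => |u| ^ s) =O[𝓝[≠] 0] fun _ => (1 : ℝ) :=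
  ((continuous_abs.rpow_const fun _ => .inr hs).continuousAt.isBigO_one ℝ).mono nhdsWithin_le_nhds

theorem periodicHilbert_sum_oddRpow_isBigO_one {ι : Type*} {S : Finset ι} {a s : ι → ℝ}
    (hs : ∀ i ∈ S, s i ∈ Ioo 0 2) (hs₁ : ∀ i ∈ S, s i ≠ 1) :
    (fun u => periodicHilbert (fun x => ∑ i ∈ S, a i * oddRpow (s i - 1) x) u -
      ∑ i ∈ S, a i * tan (π * s i / 2) * |u| ^ (s i - 1)) =O[𝓝[≠] 0] fun _ => (1 : ℝ) := by
  have hp : ∀ i ∈ S, -1 < s i - 1 := fun i hi => by linarith [(hs i hi).1]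
  have hdiff : ∀ᶠ u in 𝓝[≠] (0 : ℝ),
      DifferentiableAt ℝ (fun x => ∑ i ∈ S, a i * oddRpow (s i - 1) x) u := by
    filter_upwards [self_mem_nhdsWithin] with u hu
    exact .fun_sum fun i _ => (differentiableAt_oddRpow _ hu).const_mul (a i)
  have hmul : (fun u => u * ∑ i ∈ S, a i * oddRpow (s i - 1) u) =O[𝓝[≠] 0] fun _ => (1 : ℝ) := by
    refine (IsBigO.fun_sum fun i hi =>
      (abs_rpow_isBigO_one (hs i hi).1.le).const_mul_left (a i)).congr' ?_ .rfl
    filter_upwards [self_mem_nhdsWithin] with u hu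
    simp only [Finset.mul_sum, mul_left_comm u, mul_oddRpow_sub_one _ hu]
  have hslope := (IsBigO.fun_sum fun i hi => (integral_slope_oddRpow_sub_isBigO_one (hs i hi)
    (hs₁ i hi) pi_pos).const_mul_left (a i)).const_mul_left (1 / π)
  refine ((periodicHilbert_sub_integral_slope_isBigO_one (integrableOn_sum_oddRpow hp _ _)
    (integral_sum_oddRpow_eq_zero hp pi_nonneg) hdiff hmul).add hslope).congr' ?_ .rfl
  filter_upwards [self_mem_nhdsWithin] with u hu
  have hterm (i : ι) : a i * (π * tan (π * s i / 2) * |u| ^ (s i - 1)) =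
      π * (a i * tan (π * s i / 2) * |u| ^ (s i - 1)) := by ring
  simp only [integral_slope_sum_oddRpow hp hu, mul_sub, Finset.sum_sub_distrib, hterm,
    ← Finset.mul_sum]
  field_simp
  ring

theorem perExt_of_mem_Ico {g : ℝ → ℝ} {x : ℝ} (hx : x ∈ Ico (-π) π) : perExt g x = g x := by
  have hfloor : ⌊(x + π) / (2 * π)⌋ = 0 := by
    rw [Int.floor_eq_zero_iff]
    exact ⟨div_nonneg (by linarith [hx.1]) two_pi_pos.le,
      (div_lt_one two_pi_pos).2 (by linarith [hx.2])⟩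
  rw [perExt, hfloor, Int.cast_zero, mul_zero, sub_zero]

theorem perExt_eventuallyEq (g : ℝ → ℝ) {x : ℝ} (hx : x ∈ Ioo (-π) π) : perExt g =ᶠ[𝓝 x] g := by
  filter_upwards [Ioo_mem_nhds hx.1 hx.2] with y hy
  exact perExt_of_mem_Ico (Ioo_subset_Ico_self hy)

theorem deriv_perExt_sum_abs_rpow {ι : Type*} (S : Finset ι) (c s : ι → ℝ) :
    deriv (perExt fun x => ∑ i ∈ S, c i * |x| ^ s i) =ᵐ[volume.restrict (Ioo (-π) π)]
      fun x => ∑ i ∈ S, c i * s i * oddRpow (s i - 1) x := by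
  filter_upwards [self_mem_ae_restrict measurableSet_Ioo,
    ae_restrict_of_ae (Measure.ae_ne volume 0)] with x hx hx₀
  rw [(perExt_eventuallyEq _ hx).deriv_eq]
  simpa only [mul_assoc] using
    (HasDerivAt.fun_sum fun i _ => (hasDerivAt_abs_rpow_oddRpow (s i) hx₀).const_mul (c i)).deriv

theorem Kinf_perExt_sum_abs_rpow_isBigO_one {ι : Type*} {S : Finset ι} {c s : ι → ℝ}
    (hs : ∀ i ∈ S, s i ∈ Ioo 0 2) (hs₁ : ∀ i ∈ S, s i ≠ 1) :
    (fun u => Kinf (perExt fun x => ∑ i ∈ S, c i * |x| ^ s i) u +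
      ∑ i ∈ S, c i * s i * tan (π * s i / 2) * |u| ^ (s i - 1)) =O[𝓝[≠] 0] fun _ => (1 : ℝ) := by
  have hH := periodicHilbert_sum_oddRpow_isBigO_one (a := fun i => c i * s i) hs hs₁
  refine hH.neg_left.congr_left fun u => ?_
  rw [Kinf, periodicHilbert_congr_ae (deriv_perExt_sum_abs_rpow S c s)]
  ring

theorem abs_rpow_isLittleO_abs_rpow {p q : ℝ} (hpq : p < q) :
    (fun u : ℝ => |u| ^ q) =o[𝓝[≠] 0] fun u => |u| ^ p := by
  have hlim : Tendsto (fun u : ℝ => |u| ^ (q - p)) (𝓝[≠] 0) (𝓝 0) := by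
    have hcont : Continuous fun u : ℝ => |u| ^ (q - p) :=
      continuous_abs.rpow_const fun _ => .inr (by linarith)
    refine (hcont.tendsto' 0 0 ?_).mono_left nhdsWithin_le_nhds
    rw [abs_zero, zero_rpow (by linarith)]
  refine (isLittleO_iff_tendsto' ?_).2 (hlim.congr' ?_)
  all_goals
    filter_upwards [self_mem_nhdsWithin] with u hu
  · exact fun h => absurd h (rpow_pos_of_pos (abs_pos.2 hu) p).ne'
  · exact rpow_sub (abs_pos.2 hu) q p

theorem Kinf_perExt_add_isBigO_one (A B : ℝ) {s μ : ℝ} (hs : s ∈ Ioo 0 2) (hs₁ : s ≠ 1)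
    (hμ : μ ∈ Ioo 0 2) (hμ₁ : μ ≠ 1) :
    (fun u => Kinf (perExt fun x => A * |x| ^ s + B * |x| ^ μ) u +
      (A * s * tan (π * s / 2) * |u| ^ (s - 1) + B * μ * tan (π * μ / 2) * |u| ^ (μ - 1)))
      =O[𝓝[≠] 0] fun _ => (1 : ℝ) := by
  have h := Kinf_perExt_sum_abs_rpow_isBigO_one (S := Finset.univ) (c := ![A, B]) (s := ![s, μ])
    (by simpa [Fin.forall_fin_two] using ⟨hs, hμ⟩) (by simpa [Fin.forall_fin_two] using ⟨hs₁, hμ₁⟩)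
  simpa only [Fin.sum_univ_two, Matrix.cons_val_zero, Matrix.cons_val_one] using h

theorem perExt_add_isBigO (A B : ℝ) {s μ : ℝ} (hsμ : s < μ) :
    perExt (fun x => A * |x| ^ s + B * |x| ^ μ) =O[𝓝[≠] 0] fun u => |u| ^ s := by
  have hlocal := (perExt_eventuallyEq (fun x => A * |x| ^ s + B * |x| ^ μ)
    ⟨neg_lt_zero.2 pi_pos, pi_pos⟩).filter_mono (nhdsWithin_le_nhds (s := {0}ᶜ))
  refine IsBigO.congr' ?_ hlocal.symm .rfl
  exact ((isBigO_refl _ _).const_mul_left A).add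
    ((abs_rpow_isLittleO_abs_rpow hsμ).isBigO.const_mul_left B)

theorem expansion_f_Kinf_f_general (A B : ℝ) {s μ : ℝ} (hs : 0 < s) (hs₁ : s ≠ 1) (hsμ : s < μ)
    (hμ : μ < 2) (hμ₁ : μ ≠ 1) :
    ∃ R₁ R₂ : ℝ → ℝ,
      R₁ =O[𝓝[≠] 0] (fun u => |u| ^ s) ∧
      R₂ =o[𝓝[≠] 0] (fun u => |u| ^ (s + μ - 1)) ∧
      ∀ᶠ u in 𝓝[≠] 0,
        perExt (fun x => A * |x| ^ s + B * |x| ^ μ) u *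
            Kinf (perExt (fun x => A * |x| ^ s + B * |x| ^ μ)) u =
          -(s * tan (π * s / 2)) * A ^ 2 * |u| ^ (2 * s - 1)
            - A * B * (s * tan (π * s / 2) + μ * tan (π * μ / 2)) * |u| ^ (s + μ - 1)
            + R₁ u + R₂ u := by
  set f := perExt fun x => A * |x| ^ s + B * |x| ^ μ
  set E : ℝ → ℝ := fun u => Kinf f u +
    (A * s * tan (π * s / 2) * |u| ^ (s - 1) + B * μ * tan (π * μ / 2) * |u| ^ (μ - 1)) with hE
  have hE_bound : E =O[𝓝[≠] 0] fun _ => (1 : ℝ) :=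
    Kinf_perExt_add_isBigO_one A B ⟨hs, hsμ.trans hμ⟩ hs₁ ⟨hs.trans hsμ, hμ⟩ hμ₁
  refine ⟨fun u => f u * E u, fun u => -(B ^ 2 * μ * tan (π * μ / 2)) * |u| ^ (2 * μ - 1),
    by simpa only [mul_one] using (perExt_add_isBigO A B hsμ).mul hE_bound,
    (abs_rpow_isLittleO_abs_rpow (by linarith)).const_mul_left _, ?_⟩
  have hf_local : f =ᶠ[𝓝 0] fun x => A * |x| ^ s + B * |x| ^ μ :=
    perExt_eventuallyEq _ ⟨neg_lt_zero.2 pi_pos, pi_pos⟩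
  filter_upwards [self_mem_nhdsWithin, nhdsWithin_le_nhds hf_local] with u hu hfu
  have hmul (p q : ℝ) : |u| ^ (p + q - 1) = |u| ^ p * |u| ^ (q - 1) := by
    rw [add_sub_assoc, rpow_add (abs_pos.2 hu)]
  have hcomm : |u| ^ s * |u| ^ (μ - 1) = |u| ^ μ * |u| ^ (s - 1) := by
    rw [← hmul, ← hmul, add_comm]
  have hKinf : Kinf f u = E u - (A * s * tan (π * s / 2) * |u| ^ (s - 1) +
      B * μ * tan (π * μ / 2) * |u| ^ (μ - 1)) := by rw [hE]; ring
  rw [two_mul, two_mul, hmul, hmul, hmul, hKinf, mul_sub, hfu]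
  linear_combination A * B * s * tan (π * s / 2) * hcomm

theorem two_thirds_mul_tan : 2 / 3 * tan (π * (2 / 3) / 2) = 2 / √3 := by
  rw [show π * (2 / 3) / 2 = π / 3 by ring, tan_pi_div_three, div_mul_eq_mul_div,
    div_eq_div_iff three_ne_zero (by positivity), mul_assoc, mul_self_sqrt zero_le_three]

/-- Expansion of `f · K_∞ f` for `f` the `2π`-periodic extension of `A|u|^(2/3) + B|u|^μ`. -/
theorem expansion_f_Kinf_f (A B μ : ℝ) (hA : 0 < A) (hμ : μ ∈ Set.Ioo (2/3 : ℝ) 2)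
    (hμ1 : μ ≠ 1) :
    ∃ R₁ R₂ : ℝ → ℝ,
      R₁ =O[nhdsWithin (0:ℝ) {0}ᶜ] (fun u => |u| ^ ((2:ℝ)/3)) ∧
      R₂ =o[nhdsWithin (0:ℝ) {0}ᶜ] (fun u => |u| ^ (μ - 1/3)) ∧
      ∀ᶠ u in nhdsWithin (0:ℝ) {0}ᶜ,
        perExt (fun x => A * |x| ^ ((2:ℝ)/3) + B * |x| ^ μ) u *
            Kinf (perExt (fun x => A * |x| ^ ((2:ℝ)/3) + B * |x| ^ μ)) u =
          -(2/Real.sqrt 3) * A^2 * |u| ^ ((1:ℝ)/3)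
            - A * B * (2/Real.sqrt 3 + μ * Real.tan (π*μ/2)) * |u| ^ (μ - 1/3)
            + R₁ u + R₂ u := by
  have h := expansion_f_Kinf_f_general A B (s := 2 / 3) (by norm_num) (by norm_num) hμ.1 hμ.2 hμ1
  rwa [two_thirds_mul_tan, show 2 * (2 / 3 : ℝ) - 1 = 1 / 3 by norm_num,
    show 2 / 3 + μ - 1 = μ - 1 / 3 by ring] at h
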